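/- arXiv:1505.00283 — 2 statements merged into one kernel-verified Lean document; each statement's English description precedes it below -/
import Mathlib

section
/- Let S be an abelian subgroup of the Pauli group G_d^n with no nontrivial scalars. Then the complex dimension of the fixed subspace Fix(S) satisfies (finrank ℂ Fix(S)) * Nat.card S = d^n; in particular Nat.card S divides d^n and the subspace stabilized by S has dimension d^n / |S|. -/
open Matrix

noncomputable def q (d : ℕ) : ℂ := Complex.exp (2 * Real.pi * Complex.I / d)

/-- Dot product of two vectors over `ZMod d`. -/
def dotp {n d : ℕ} (A B : Fin n → ZMod d) : ZMod d := ∑ i, A i * B i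

/-- The Pauli word `W(U,V)` with entries `q^{⟨U,J⟩}` at `(J, K)` when `J = K + V`. -/
noncomputable def PauliWord (d n : ℕ) (U V : Fin n → ZMod d) :
    Matrix (Fin n → ZMod d) (Fin n → ZMod d) ℂ :=
  Matrix.of fun J K => if J = K + V then q d ^ (dotp U J).val else 0

/-- The n-qudit Pauli group, as a set of matrices. -/
noncomputable def PauliSet (d n : ℕ) : Set (Matrix (Fin n → ZMod d) (Fin n → ZMod d) ℂ) :=
  {g | ∃ (k : ZMod d) (U V : Fin n → ZMod d), g = q d ^ k.val • PauliWord d n U V}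

/-- The subspace of states fixed by every matrix in `S`. -/
noncomputable def FixSubspace (d n : ℕ) [NeZero d]
    (S : Set (Matrix (Fin n → ZMod d) (Fin n → ZMod d) ℂ)) :
    Submodule ℂ ((Fin n → ZMod d) → ℂ) where
  carrier := {ψ | ∀ s ∈ S, s.mulVec ψ = ψ}
  add_mem' := by
    intro a b ha hb s hs
    simp [Matrix.mulVec_add, ha s hs, hb s hs]
  zero_mem' := by
    intro s hs
    simp [Matrix.mulVec_zero]
  smul_mem' := by
    intro c a ha s hs
    simp [Matrix.mulVec_smul, ha s hs]


lemma q_prim (d : ℕ) [NeZero d] : IsPrimitiveRoot (q d) d :=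
  Complex.isPrimitiveRoot_exp d (NeZero.ne d)

lemma q_val_add (d : ℕ) [NeZero d] (a b : ZMod d) :
    q d ^ (a + b).val = q d ^ a.val * q d ^ b.val := by
  rw [ZMod.val_add, ← pow_add]
  exact (pow_eq_pow_mod _ (q_prim d).pow_eq_one).symm

lemma char_sum_zero (d n : ℕ) [NeZero d] (U : Fin n → ZMod d) (hU : U ≠ 0) :
    ∑ J : Fin n → ZMod d, q d ^ (dotp U J).val = 0 := by
  obtain ⟨i, hi⟩ : ∃ i, U i ≠ 0 := by
    by_contra! h
    exact hU (funext h)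
  have h1 : q d ^ (U i).val ≠ 1 := by
    intro h
    have h2 := (q_prim d).dvd_of_pow_eq_one _ h
    have h3 := Nat.eq_zero_of_dvd_of_lt h2 (ZMod.val_lt _)
    exact hi ((ZMod.val_eq_zero _).1 h3)
  have h2 : ∑ J : Fin n → ZMod d, q d ^ (dotp U J).val
      = q d ^ (U i).val * ∑ J : Fin n → ZMod d, q d ^ (dotp U J).val := by
    conv_lhs => rw [← Equiv.sum_comp (Equiv.addRight (Pi.single i (1 : ZMod d)))]
    rw [Finset.mul_sum]
    refine Finset.sum_congr rfl fun J _ => ?_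
    rw [← q_val_add]
    congr 2
    simp [dotp, mul_add, Finset.sum_add_distrib, Pi.single_apply, add_comm]
  have h3 : (q d ^ (U i).val - 1) * ∑ J : Fin n → ZMod d, q d ^ (dotp U J).val = 0 := by
    linear_combination -h2
  exact (mul_eq_zero.1 h3).resolve_left (sub_ne_zero.2 h1)

lemma pauli_trace (d n : ℕ) [NeZero d] (U V : Fin n → ZMod d) (h : ¬ (U = 0 ∧ V = 0)) :
    (PauliWord d n U V).trace = 0 := by
  by_cases hV : V = 0
  · have hU : U ≠ 0 := fun hU => h ⟨hU, hV⟩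
    simpa [Matrix.trace, PauliWord, hV] using char_sum_zero d n U hU
  · simp [Matrix.trace, PauliWord, hV]

lemma pauli_zero (d n : ℕ) [NeZero d] : PauliWord d n 0 0 = 1 := by
  ext J K
  simp [PauliWord, dotp, Matrix.one_apply]

lemma pauliSet_finite (d n : ℕ) [NeZero d] : (PauliSet d n).Finite := by
  refine (Set.finite_range (fun p : ZMod d × (Fin n → ZMod d) × (Fin n → ZMod d) =>
    q d ^ p.1.val • PauliWord d n p.2.1 p.2.2)).subset ?_
  rintro g ⟨k, U, V, rfl⟩
  exact ⟨(k, U, V), rfl⟩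

theorem finrank_fixSubspace_mul_card (d n : ℕ) [NeZero d] (hd : 2 ≤ d) (hn : 1 ≤ n)
    (S : Set (Matrix (Fin n → ZMod d) (Fin n → ZMod d) ℂ))
    (hSsub : S ⊆ PauliSet d n)
    (hS1 : (1 : Matrix (Fin n → ZMod d) (Fin n → ZMod d) ℂ) ∈ S)
    (hSmul : ∀ a ∈ S, ∀ b ∈ S, a * b ∈ S)
    (hSinv : ∀ a ∈ S, ∃ b ∈ S, a * b = 1)
    (hScomm : ∀ a ∈ S, ∀ b ∈ S, a * b = b * a)
    (hSscal : ∀ c : ℂ, c • (1 : Matrix (Fin n → ZMod d) (Fin n → ZMod d) ℂ) ∈ S →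
      c • (1 : Matrix (Fin n → ZMod d) (Fin n → ZMod d) ℂ) = 1) :
    Module.finrank ℂ (FixSubspace d n S) * Nat.card S = d ^ n ∧
    Nat.card S ∣ d ^ n ∧
    Module.finrank ℂ (FixSubspace d n S) = d ^ n / Nat.card S := by
  classical
  have hfin : S.Finite := (pauliSet_finite d n).subset hSsub
  set F := hfin.toFinset with hF
  have hmem : ∀ s, s ∈ F ↔ s ∈ S := fun s => hfin.mem_toFinset
  have hcard : Nat.card S = F.card := Nat.card_eq_card_finite_toFinset hfin
  have hpos : 0 < F.card := Finset.card_pos.2 ⟨1, (hmem 1).2 hS1⟩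
  have hne : (F.card : ℂ) ≠ 0 := by exact_mod_cast hpos.ne'
  set M : Matrix (Fin n → ZMod d) (Fin n → ZMod d) ℂ := ∑ s ∈ F, s with hM
  have habs : ∀ a ∈ S, a * M = M := by
    intro a ha
    obtain ⟨b, hb, hab⟩ := hSinv a ha
    have hba : b * a = 1 := by rw [hScomm b hb a ha, hab]
    rw [hM, Finset.mul_sum]
    refine Finset.sum_bij' (fun s _ => a * s) (fun s _ => b * s) ?_ ?_ ?_ ?_ ?_
    · intro s hs
      exact (hmem _).2 (hSmul a ha s ((hmem s).1 hs))
    · intro s hs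
      exact (hmem _).2 (hSmul b hb s ((hmem s).1 hs))
    · intro s _
      simp [← mul_assoc, hba]
    · intro s _
      simp [← mul_assoc, hab]
    · intro s _
      rfl
  have htr : M.trace = (d : ℂ) ^ n := by
    rw [hM, Matrix.trace_sum, Finset.sum_eq_single 1]
    · simp [Matrix.trace_one]
    · intro s hs hs1
      have hsS := (hmem s).1 hs
      obtain ⟨k, U, V, rfl⟩ := hSsub hsS
      rw [Matrix.trace_smul, pauli_trace, smul_zero]
      rintro ⟨rfl, rfl⟩
      rw [pauli_zero] at hsS hs1
      exact hs1 (hSscal _ hsS)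
    · intro h
      exact absurd ((hmem 1).2 hS1) h
  have hproj : LinearMap.IsProj (FixSubspace d n S)
      (Matrix.toLin' ((F.card : ℂ)⁻¹ • M)) := by
    constructor
    · intro x s hs
      rw [Matrix.toLin'_apply, Matrix.mulVec_mulVec, Matrix.mul_smul, habs s hs]
    · intro x hx
      rw [Matrix.toLin'_apply, Matrix.smul_mulVec, hM, Matrix.sum_mulVec,
        Finset.sum_congr rfl (fun s hs => hx s ((hmem s).1 hs)), Finset.sum_const,
        ← Nat.cast_smul_eq_nsmul ℂ, smul_smul, inv_mul_cancel₀ hne, one_smul]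
  have ht := hproj.trace
  rw [Matrix.trace_toLin'_eq, Matrix.trace_smul, htr, smul_eq_mul] at ht
  have key : Module.finrank ℂ (FixSubspace d n S) * Nat.card S = d ^ n := by
    rw [hcard]
    have : (Module.finrank ℂ (FixSubspace d n S) : ℂ) * (F.card : ℂ) = (d : ℂ) ^ n := by
      rw [← ht]
      field_simp
    exact_mod_cast this
  refine ⟨key, ⟨_, by rw [mul_comm]; exact key.symm⟩, ?_⟩
  rw [← key, Nat.mul_div_cancel _ (hcard ▸ hpos)]
end

section
/- Let S be an abelian subgroup of the Pauli group G_d^n with no nontrivial scalars and with Nat.card S = d^n. Then the fixed subspace Fix(S) has complex dimension 1, and S is a maximal set of Pauli operators stabilizing it: for every nonzero ψ ∈ Fix(S) and every P ∈ G_d^n with P.mulVec ψ = ψ, one has P ∈ S. -/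
open Matrix

lemma q_pow_val (d : ℕ) [NeZero d] (x : ZMod d) : q d ^ x.val = ZMod.stdAddChar x := by
  have h := ZMod.stdAddChar_coe (N := d) (x.val : ℤ)
  have hx : (((x.val : ℕ) : ℤ) : ZMod d) = x := by simp
  rw [hx] at h
  rw [h, q, ← Complex.exp_nat_mul]
  congr 1
  push_cast
  ring

lemma dotp_add_left {n d : ℕ} (A B C : Fin n → ZMod d) :
    dotp (A + B) C = dotp A C + dotp B C := by
  simp [dotp, add_mul, Finset.sum_add_distrib]

lemma dotp_add_right {n d : ℕ} (A B C : Fin n → ZMod d) :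
    dotp A (B + C) = dotp A B + dotp A C := by
  simp [dotp, mul_add, Finset.sum_add_distrib]

lemma pauliWord_mul (d n : ℕ) [NeZero d] (U V U' V' : Fin n → ZMod d) :
    PauliWord d n U V * PauliWord d n U' V' =
      q d ^ (-dotp U' V).val • PauliWord d n (U + U') (V + V') := by
  ext J K
  rw [Matrix.mul_apply, Finset.sum_eq_single (K + V')]
  · simp only [PauliWord, Matrix.of_apply, Matrix.smul_apply, q_pow_val, smul_eq_mul, if_true]
    have hc : (J = K + V' + V) ↔ (J = K + (V + V')) := by
      rw [add_assoc, add_comm V' V]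
    by_cases hJ : J = K + V' + V
    · rw [if_pos hJ, if_pos (hc.1 hJ), ← AddChar.map_add_eq_mul, ← AddChar.map_add_eq_mul]
      congr 1
      rw [dotp_add_left]
      nth_rewrite 3 [hJ]
      rw [dotp_add_right U' (K + V') V]
      ring
    · rw [if_neg hJ, if_neg (fun h => hJ (hc.2 h))]
      simp
  · intro L _ hL
    simp [PauliWord, hL]
  · simp

lemma pauliSet_mul (d n : ℕ) [NeZero d] {P Q : Matrix (Fin n → ZMod d) (Fin n → ZMod d) ℂ}
    (hP : P ∈ PauliSet d n) (hQ : Q ∈ PauliSet d n) : P * Q ∈ PauliSet d n := by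
  obtain ⟨k, U, V, rfl⟩ := hP
  obtain ⟨l, U', V', rfl⟩ := hQ
  refine ⟨k + l + (-dotp U' V), U + U', V + V', ?_⟩
  rw [Matrix.smul_mul, Matrix.mul_smul, pauliWord_mul, smul_smul, smul_smul]
  simp only [q_pow_val, AddChar.map_add_eq_mul, mul_assoc]

lemma trace_pauliWord (d n : ℕ) [NeZero d] (U V : Fin n → ZMod d)
    (h : (PauliWord d n U V).trace ≠ 0) : PauliWord d n U V = 1 := by
  have hV : V = 0 := by
    by_contra hV
    apply h
    simp [Matrix.trace, PauliWord, hV]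
  subst hV
  let χ : AddChar (Fin n → ZMod d) ℂ :=
    { toFun := fun J => ZMod.stdAddChar (dotp U J)
      map_zero_eq_one' := by simp [dotp]
      map_add_eq_mul' := fun a b => by rw [dotp_add_right, AddChar.map_add_eq_mul] }
  have hχ : χ = 0 := by
    rw [← AddChar.sum_ne_zero_iff_eq_zero]
    intro h0
    apply h
    rw [← h0]
    simp [Matrix.trace, PauliWord, χ, q_pow_val]
  have hq : ∀ J, q d ^ (dotp U J).val = 1 := fun J => by
    rw [q_pow_val]
    exact DFunLike.congr_fun hχ J
  ext J K
  simp [PauliWord, hq, Matrix.one_apply]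

lemma pauliSet_trace (d n : ℕ) [NeZero d] {P : Matrix (Fin n → ZMod d) (Fin n → ZMod d) ℂ}
    (hP : P ∈ PauliSet d n) (h : P.trace ≠ 0) :
    ∃ c : ℂ, P = c • (1 : Matrix (Fin n → ZMod d) (Fin n → ZMod d) ℂ) := by
  obtain ⟨k, U, V, rfl⟩ := hP
  refine ⟨q d ^ k.val, ?_⟩
  rw [trace_pauliWord]
  intro h0
  apply h
  rw [Matrix.trace_smul, h0, smul_zero]

theorem fixSubspace_dim_one_and_maximal (d n : ℕ) [NeZero d] (hd : 2 ≤ d) (hn : 1 ≤ n)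
    (S : Set (Matrix (Fin n → ZMod d) (Fin n → ZMod d) ℂ))
    (hSsub : S ⊆ PauliSet d n)
    (hS1 : (1 : Matrix (Fin n → ZMod d) (Fin n → ZMod d) ℂ) ∈ S)
    (hSmul : ∀ a ∈ S, ∀ b ∈ S, a * b ∈ S)
    (hSinv : ∀ a ∈ S, ∃ b ∈ S, a * b = 1)
    (hScomm : ∀ a ∈ S, ∀ b ∈ S, a * b = b * a)
    (hSscal : ∀ c : ℂ, c • (1 : Matrix (Fin n → ZMod d) (Fin n → ZMod d) ℂ) ∈ S →
      c • (1 : Matrix (Fin n → ZMod d) (Fin n → ZMod d) ℂ) = 1)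
    (hcard : Nat.card S = d ^ n) :
    Module.finrank ℂ (FixSubspace d n S) = 1 ∧
    ∀ ψ ∈ FixSubspace d n S, ψ ≠ 0 →
      ∀ P ∈ PauliSet d n, P.mulVec ψ = ψ → P ∈ S := by
  have hdn : (d ^ n : ℕ) ≠ 0 := pow_ne_zero _ (NeZero.ne d)
  have hdnC : ((d : ℂ) ^ n) ≠ 0 := pow_ne_zero _ (Nat.cast_ne_zero.2 (NeZero.ne d))
  have hfin : Finite S := Nat.finite_of_card_ne_zero (by rw [hcard]; exact hdn)
  have : Fintype S := Fintype.ofFinite S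
  have hcardS : Fintype.card S = d ^ n := by rw [← Nat.card_eq_fintype_card, hcard]
  obtain ⟨M, hM⟩ : ∃ M : Matrix (Fin n → ZMod d) (Fin n → ZMod d) ℂ,
    M = ∑ s : S, (s : Matrix (Fin n → ZMod d) (Fin n → ZMod d) ℂ) := ⟨_, rfl⟩
  have hMtr : M.trace = (d : ℂ) ^ n := by
    rw [hM, Matrix.trace_sum, Finset.sum_eq_single (⟨1, hS1⟩ : S)]
    · simp [Matrix.trace_one]
    · intro s _ hs
      by_contra hne
      obtain ⟨c, hc⟩ := pauliSet_trace d n (hSsub s.2) hne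
      apply hs
      apply Subtype.ext
      have := hSscal c (hc ▸ s.2)
      rw [hc, this]
    · simp
  have hMmem : ∀ v, M.mulVec v ∈ FixSubspace d n S := by
    intro v t ht
    rw [Matrix.mulVec_mulVec]
    congr 1
    rw [hM, Finset.mul_sum]
    have hinj : Function.Injective (fun s : S => (⟨t * s, hSmul t ht s s.2⟩ : S)) := by
      intro a b hab
      obtain ⟨t', _, htt⟩ := hSinv t ht
      have htt' : t' * t = 1 := mul_eq_one_comm.1 htt
      have h1 : t * a.1 = t * b.1 := congrArg Subtype.val hab
      apply Subtype.ext
      have h2 := congrArg (t' * ·) h1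
      simpa [← mul_assoc, htt'] using h2
    exact Function.Bijective.sum_comp (Finite.injective_iff_bijective.1 hinj)
      (fun s : S => (s : Matrix (Fin n → ZMod d) (Fin n → ZMod d) ℂ))
  have hMfix : ∀ v ∈ FixSubspace d n S, M.mulVec v = ((d : ℂ) ^ n) • v := by
    intro v hv
    rw [hM, Matrix.sum_mulVec, Finset.sum_congr rfl (fun s _ => hv s.1 s.2)]
    rw [Finset.sum_const, Finset.card_univ, hcardS, ← Nat.cast_smul_eq_nsmul ℂ]
    push_cast
    rfl
  have hrank : Module.finrank ℂ (FixSubspace d n S) = 1 := by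
    have hproj : LinearMap.IsProj (FixSubspace d n S)
        (Matrix.toLin' (((d : ℂ) ^ n)⁻¹ • M)) := by
      constructor
      · intro v
        rw [Matrix.toLin'_apply, Matrix.smul_mulVec]
        exact Submodule.smul_mem _ _ (hMmem v)
      · intro v hv
        rw [Matrix.toLin'_apply, Matrix.smul_mulVec, hMfix v hv, smul_smul,
          inv_mul_cancel₀ hdnC, one_smul]
    have ht := hproj.trace
    rw [Matrix.trace_toLin'_eq, Matrix.trace_smul, hMtr, smul_eq_mul, inv_mul_cancel₀ hdnC] at ht
    exact_mod_cast ht.symm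
  refine ⟨hrank, ?_⟩
  intro ψ hψ hψ0 P hP hPψ
  have hspan := (finrank_eq_one_iff_of_nonzero' (⟨ψ, hψ⟩ : FixSubspace d n S)
    (fun h => hψ0 (congrArg Subtype.val h))).1 hrank
  have hPM : P * M = M := by
    apply Matrix.toLin'.injective
    apply LinearMap.ext
    intro v
    rw [Matrix.toLin'_apply, Matrix.toLin'_apply, ← Matrix.mulVec_mulVec]
    obtain ⟨c, hc⟩ := hspan ⟨_, hMmem v⟩
    have hc' : c • ψ = M.mulVec v := congrArg Subtype.val hc
    rw [← hc', Matrix.mulVec_smul, hPψ]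
  have hex : ∃ s : S, (P * s.1).trace ≠ 0 := by
    by_contra! hno
    apply hdnC
    rw [← hMtr, ← hPM, hM, Finset.mul_sum, Matrix.trace_sum]
    exact Finset.sum_eq_zero (fun s _ => hno s)
  obtain ⟨s, hs⟩ := hex
  obtain ⟨c, hc⟩ := pauliSet_trace d n (pauliSet_mul d n hP (hSsub s.2)) hs
  have hc1 : c = 1 := by
    have h1 : (P * s.1).mulVec ψ = ψ := by
      rw [← Matrix.mulVec_mulVec, hψ s.1 s.2, hPψ]
    rw [hc, Matrix.smul_mulVec, Matrix.one_mulVec] at h1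
    have h2 : (c - 1) • ψ = 0 := by rw [sub_smul, h1, one_smul, sub_self]
    rcases smul_eq_zero.1 h2 with h3 | h3
    · exact sub_eq_zero.1 h3
    · exact absurd h3 hψ0
  rw [hc1, one_smul] at hc
  obtain ⟨t, ht, hst⟩ := hSinv s.1 s.2
  have : P = t := by
    calc P = P * (s.1 * t) := by rw [hst, mul_one]
      _ = t := by rw [← mul_assoc, hc, one_mul]
  rw [this]
  exact ht
end
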